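/- arXiv:1701.01201 — 2 statements merged into one kernel-verified Lean document; each statement's English description precedes it below -/
import Mathlib

section
/- There exists a positive integer k₀ such that for every integer k ≥ k₀ and every δ ∈ (0,1) there exists r₀ = r₀(k,δ) with the following property. Let r ≥ r₀ be an integer, s := 2^{−kr}, and let (φ(x))_{x∈ℝ²} be a stochastic process with almost surely continuous sample paths such that (φ(x))_{x∈ℝ²} is a centered Gaussian family with E[φ(x)φ(y)] = G_r^{(1)}(x,y) for all x, y. Then for every closed axis-parallel square B* ⊂ ℝ² of side length 5s, with M := sup_{x∈B*} φ(x), one has P(M ≥ δ·k·r·log 2) ≤ 2·exp(−(1/8)·δ²·k·r·log 2). -/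
/-! The proof is a dyadic chaining argument. Write `σ² = k r log 2`, the variance of every `φ x`, and
`s = 2^{-kr}`. Since `B(x, R - d) ⊆ B(x, R) ∩ B(y, R)` for `d = |x - y| ≤ R`, one has
`1 - A(x, y; R) ≤ 2 d / R` (`one_sub_ballA_le`), and summing the geometric series over the scales gives
`E (φ x - φ y)² ≤ 4 k log 2 · d / s` (`incr_cov_le`). Hence on a square of side `5 s` the increments have
variance `O(k)`, uniformly in `r`.

Let `t = δ σ²`. If the supremum is at least `t`, then either `φ ≥ t / 2` at the lower-left corner, or for
some `n` some increment from a level-`n + 1` dyadic grid point to its parent at level `n` is at least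
`(t / 8) (3 / 4)^n` (`sup_lt_of_chain`; these thresholds sum to `t / 2`). The first event has
probability at most `exp (-t² / (8 σ²)) = exp (-δ² σ² / 8)` by the Gaussian tail bound. By the union bound the
second has probability at most `8 exp (-q)` with `q = δ² k r² log 2 / 2560` (`chain_sum_le`); being quadratic
in `r`, this `q` beats `δ² σ² / 8`, which is linear in `r`, once `r` is large. -/

open MeasureTheory ProbabilityTheory

/-- `A(x,y;R)`: normalized area of intersection of two balls of radius `R`. -/
noncomputable def ballA (x y : EuclideanSpace ℝ (Fin 2)) (R : ℝ) : ℝ :=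
  (volume (Metric.ball x R ∩ Metric.ball y R)).toReal / (volume (Metric.ball x R)).toReal

/-- `G_r^{(1)}(x,y) = k log 2 ∑_{j=0}^{r-1} A(x,y;2^{-kj})`, covariance of the coarse field. -/
noncomputable def covG1 (k r : ℕ) (x y : EuclideanSpace ℝ (Fin 2)) : ℝ :=
  (k : ℝ) * Real.log 2 * ∑ j ∈ Finset.range r, ballA x y ((2:ℝ) ^ (-(k * j : ℤ)))

/-- The closed axis-parallel square with lower-left corner `(a,b)` and side `ℓ`. -/
def sqIcc (a b ℓ : ℝ) : Set (EuclideanSpace ℝ (Fin 2)) :=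
  {x | x 0 ∈ Set.Icc a (a + ℓ) ∧ x 1 ∈ Set.Icc b (b + ℓ)}

open Filter Topology

/-! ### The covariance -/

lemma ballA_self (x : EuclideanSpace ℝ (Fin 2)) {R : ℝ} (hR : 0 < R) : ballA x x R = 1 := by
  unfold ballA
  rw [Set.inter_self]
  exact div_self (ENNReal.toReal_pos (Metric.measure_ball_pos _ _ hR).ne' measure_ball_lt_top.ne).ne'

lemma one_sub_ballA_le (x y : EuclideanSpace ℝ (Fin 2)) {R : ℝ} (hR : 0 < R) :
    1 - ballA x y R ≤ 2 * dist x y / R := by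
  have h0 : 0 ≤ ballA x y R := by unfold ballA; positivity
  rcases le_total R (dist x y) with h | h
  · have : 2 ≤ 2 * dist x y / R := by rw [le_div_iff₀ hR]; linarith
    linarith
  · have hsub : Metric.ball x (R - dist x y) ⊆ Metric.ball x R ∩ Metric.ball y R := by
      intro z hz
      rw [Metric.mem_ball] at hz
      refine ⟨?_, ?_⟩ <;> rw [Metric.mem_ball]
      · linarith [dist_nonneg (x := x) (y := y)]
      · linarith [dist_triangle z x y]
    have hle := ENNReal.toReal_mono
      ((measure_mono Set.inter_subset_left).trans_lt
        (measure_ball_lt_top (μ := (volume : Measure (EuclideanSpace ℝ (Fin 2)))) (x := x)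
          (r := R))).ne (measure_mono (μ := volume) hsub)
    have hd : 0 ≤ R - dist x y := by linarith
    have hc : 0 < (volume (Metric.ball (0 : EuclideanSpace ℝ (Fin 2)) 1)).toReal :=
      ENNReal.toReal_pos (Metric.measure_ball_pos _ _ one_pos).ne' measure_ball_lt_top.ne
    have hA : (R - dist x y) ^ 2 / R ^ 2 ≤ ballA x y R := by
      unfold ballA
      rw [Measure.addHaar_ball _ _ hd] at hle
      rw [Measure.addHaar_ball _ x hR.le]
      simp only [finrank_euclideanSpace, Fintype.card_fin, ENNReal.toReal_mul] at hle ⊢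
      rw [ENNReal.toReal_ofReal (by positivity)] at hle ⊢
      rw [div_le_div_iff₀ (by positivity) (by positivity)]
      nlinarith [sq_nonneg R]
    have : 1 - (R - dist x y) ^ 2 / R ^ 2 ≤ 2 * dist x y / R := by
      have e : 2 * dist x y / R - (1 - (R - dist x y) ^ 2 / R ^ 2) = (dist x y / R) ^ 2 := by
        field_simp
        ring
      nlinarith [sq_nonneg (dist x y / R)]
    linarith

lemma covG1_self (k r : ℕ) (x : EuclideanSpace ℝ (Fin 2)) :
    covG1 k r x x = k * r * Real.log 2 := by
  unfold covG1
  rw [Finset.sum_congr rfl fun j _ => ballA_self x (by positivity)]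
  simp
  ring

lemma geom_sum_le_pow (N : ℝ) (hN : 2 ≤ N) (r : ℕ) : ∑ j ∈ Finset.range r, N ^ j ≤ N ^ r := by
  induction r with
  | zero => simp
  | succ n ih =>
    rw [Finset.sum_range_succ, pow_succ]
    have : 0 ≤ N ^ n := by positivity
    nlinarith

/-- The left-hand side is `E (φ x - φ y)²`; it is Lipschitz at scale `2^{-kr}`. -/
lemma incr_cov_le (k r : ℕ) (hk : 1 ≤ k) (x y : EuclideanSpace ℝ (Fin 2)) :
    covG1 k r x x + covG1 k r y y - 2 * covG1 k r x y
      ≤ 4 * (k * Real.log 2) * dist x y * 2 ^ (k * r) := by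
  have hl : 0 ≤ (k : ℝ) * Real.log 2 := by positivity
  have e : covG1 k r x x + covG1 k r y y - 2 * covG1 k r x y
      = 2 * (k * Real.log 2) * ∑ j ∈ Finset.range r, (1 - ballA x y ((2:ℝ) ^ (-(k * j : ℤ)))) := by
    rw [covG1_self, covG1_self, covG1, Finset.sum_sub_distrib]
    simp
    ring
  have h1 : ∑ j ∈ Finset.range r, (1 - ballA x y ((2:ℝ) ^ (-(k * j : ℤ))))
      ≤ 2 * dist x y * ∑ j ∈ Finset.range r, ((2:ℝ) ^ k) ^ j := by
    rw [Finset.mul_sum]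
    refine Finset.sum_le_sum fun j _ => (one_sub_ballA_le x y (by positivity)).trans_eq ?_
    rw [zpow_neg, div_inv_eq_mul, ← pow_mul]
    norm_cast
  have h2 : (2:ℝ) ≤ 2 ^ k := by
    simpa using pow_le_pow_right₀ (one_le_two (α := ℝ)) hk
  have h3 := geom_sum_le_pow _ h2 r
  rw [← pow_mul] at h3
  rw [e]
  calc _ ≤ 2 * (k * Real.log 2) * (2 * dist x y * 2 ^ (k * r)) := by
        refine mul_le_mul_of_nonneg_left (h1.trans ?_) (by positivity)
        exact mul_le_mul_of_nonneg_left h3 (by positivity)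
    _ = _ := by ring

/-! ### Gaussian variables -/

section Gaussian

variable {Ω : Type} {mΩ : MeasurableSpace Ω} {P : Measure Ω}

lemma aemeasurable_of_map_gaussian {X : Ω → ℝ} {v : NNReal} (h : P.map X = gaussianReal 0 v) :
    AEMeasurable X P :=
  AEMeasurable.of_map_ne_zero (by rw [h]; exact IsProbabilityMeasure.ne_zero _)

lemma memLp_of_map_gaussian {X : Ω → ℝ} {v : NNReal} (h : P.map X = gaussianReal 0 v) :
    MemLp X 2 P := by
  have hm := aemeasurable_of_map_gaussian h
  have := memLp_id_gaussianReal' (μ := 0) (v := v) 2 (by simp)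
  rw [← h] at this
  exact (memLp_map_measure_iff this.1 hm).1 this

lemma integral_sq_of_map_gaussian {X : Ω → ℝ} {v : NNReal} (h : P.map X = gaussianReal 0 v) :
    ∫ ω, X ω ^ 2 ∂P = v := by
  have hm := aemeasurable_of_map_gaussian h
  have h1 : ∫ x, x ^ 2 ∂(gaussianReal 0 v) = v := by
    have := variance_fun_id_gaussianReal (μ := 0) (v := v)
    rw [variance_eq_integral (by fun_prop)] at this
    simpa using this
  rw [← h1, ← h, integral_map hm (by fun_prop)]

lemma tail_of_map_gaussian [IsProbabilityMeasure P] {X : Ω → ℝ} {v : NNReal}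
    (h : P.map X = gaussianReal 0 v)
    {V t : ℝ} (hV : 0 < V) (hv : (v : ℝ) ≤ V) (ht : 0 ≤ t) :
    P {ω | t ≤ X ω} ≤ ENNReal.ofReal (Real.exp (-(t ^ 2 / (2 * V)))) := by
  have hm := aemeasurable_of_map_gaussian h
  have hint : Integrable (fun ω => Real.exp (t / V * X ω)) P := by
    have := integrable_exp_mul_gaussianReal (μ := 0) (v := v) (t / V)
    rw [← h] at this
    exact this.comp_aemeasurable hm
  have hc := measure_ge_le_exp_mul_mgf t (div_nonneg ht hV.le) hint
  rw [mgf_gaussianReal h, ← Real.exp_add] at hc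
  rw [← ENNReal.ofReal_toReal (measure_ne_top P {ω | t ≤ X ω})]
  refine ENNReal.ofReal_le_ofReal (hc.trans (Real.exp_le_exp.2 ?_))
  have : (v : ℝ) * (t / V) ^ 2 / 2 ≤ V * (t / V) ^ 2 / 2 := by gcongr
  have e : -(t / V) * t + V * (t / V) ^ 2 / 2 = -(t ^ 2 / (2 * V)) := by
    field_simp
    ring
  linarith

end Gaussian

/-! ### Dyadic grids and chaining -/

/-- The level-`n` dyadic grid point with indices `i, j` in the square of corner `(a, b)` and side `L`.
The indices are meant to run over `0, …, 2^n - 1`, so the grid omits the upper and right edges. -/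
noncomputable def grid (a b L : ℝ) (n i j : ℕ) : EuclideanSpace ℝ (Fin 2) :=
  !₂[a + L * (i / 2 ^ n), b + L * (j / 2 ^ n)]

lemma half_diff (n i : ℕ) :
    |(i : ℝ) / 2 ^ (n + 1) - ((i / 2 : ℕ) : ℝ) / 2 ^ n| ≤ 1 / 2 / 2 ^ n := by
  have h : (i : ℝ) = 2 * ((i / 2 : ℕ) : ℝ) + ((i % 2 : ℕ) : ℝ) := by
    exact_mod_cast (Nat.div_add_mod i 2).symm
  have h2 : ((i % 2 : ℕ) : ℝ) ≤ 1 := by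
    exact_mod_cast Nat.lt_succ_iff.1 (Nat.mod_lt i two_pos)
  have e : (i : ℝ) / 2 ^ (n + 1) - ((i / 2 : ℕ) : ℝ) / 2 ^ n = ((i % 2 : ℕ) : ℝ) / 2 / 2 ^ n := by
    rw [h, pow_succ]
    field_simp
    ring_nf
  rw [e, abs_of_nonneg (by positivity)]
  gcongr

lemma dist_grid_le (a b : ℝ) {L : ℝ} (hL : 0 ≤ L) (n i j : ℕ) :
    dist (grid a b L (n + 1) i j) (grid a b L n (i / 2) (j / 2)) ≤ L / 2 ^ n := by
  rw [EuclideanSpace.dist_eq]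
  refine Real.sqrt_le_iff.2 ⟨by positivity, ?_⟩
  simp only [Fin.sum_univ_two, grid, Real.dist_eq]
  have aux : ∀ (c : ℝ) (m : ℕ), |c + L * ((m : ℝ) / 2 ^ (n + 1)) -
      (c + L * (((m / 2 : ℕ) : ℝ) / 2 ^ n))| ^ 2 ≤ (L / 2 ^ n) ^ 2 / 2 := by
    intro c m
    have hm := half_diff n m
    rw [add_sub_add_left_eq_sub, ← mul_sub, abs_mul, abs_of_nonneg hL]
    calc _ ≤ (L * (1 / 2 / 2 ^ n)) ^ 2 := by gcongr
      _ = (L / 2 ^ n) ^ 2 / 4 := by ring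
      _ ≤ _ := by nlinarith [sq_nonneg (L / 2 ^ n)]
  have h1 := aux a i
  have h2 := aux b j
  simp only [Matrix.cons_val_zero, Matrix.cons_val_one]
  linarith

lemma exists_index {u : ℝ} (hu : u ∈ Set.Icc (0:ℝ) 1) (n : ℕ) :
    ∃ i : ℕ, i < 2 ^ n ∧ |(i : ℝ) / 2 ^ n - u| ≤ (1 / 2) ^ n := by
  have hp : (0:ℝ) < 2 ^ n := by positivity
  have key : ∃ i : ℕ, i < 2 ^ n ∧ |(i : ℝ) - u * 2 ^ n| ≤ 1 := by
    by_cases h0 : u * 2 ^ n ≤ 0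
    · refine ⟨0, by positivity, ?_⟩
      have : u * 2 ^ n = 0 := le_antisymm h0 (mul_nonneg hu.1 hp.le)
      simp [this]
    · push Not at h0
      have h1 : ⌈u * 2 ^ n⌉₊ ≤ 2 ^ n := Nat.ceil_le.2 (by push_cast; nlinarith [hu.2])
      have h2 : 0 < ⌈u * 2 ^ n⌉₊ := Nat.ceil_pos.2 h0
      refine ⟨⌈u * 2 ^ n⌉₊ - 1, by omega, ?_⟩
      rw [Nat.cast_sub h2, abs_le]
      have := Nat.le_ceil (u * 2 ^ n)
      have := Nat.ceil_lt_add_one h0.le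
      push_cast
      constructor <;> linarith
  obtain ⟨i, hi, h⟩ := key
  refine ⟨i, hi, ?_⟩
  have e : (i : ℝ) / 2 ^ n - u = ((i : ℝ) - u * 2 ^ n) / 2 ^ n := by field_simp
  rw [e, abs_div, abs_of_pos hp, one_div, inv_pow, ← one_div]
  gcongr

lemma exists_coord {L : ℝ} (hL : 0 < L) {a x : ℝ} (hx : x ∈ Set.Icc a (a + L)) :
    ∃ i : ℕ → ℕ, (∀ n, i n < 2 ^ n) ∧
      Tendsto (fun n => a + L * ((i n : ℝ) / 2 ^ n)) atTop (𝓝 x) := by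
  have hu : (x - a) / L ∈ Set.Icc (0:ℝ) 1 :=
    ⟨div_nonneg (by linarith [hx.1]) hL.le, by rw [div_le_one hL]; linarith [hx.2]⟩
  choose i hi hd using exists_index hu
  refine ⟨i, hi, ?_⟩
  have h1 : Tendsto (fun n => (i n : ℝ) / 2 ^ n - (x - a) / L) atTop (𝓝 0) :=
    squeeze_zero_norm hd (tendsto_pow_atTop_nhds_zero_of_lt_one (by norm_num) (by norm_num))
  have h2 := ((h1.const_mul L).add_const x)
  simp only [mul_zero, zero_add] at h2
  refine h2.congr fun n => ?_
  field_simp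
  ring

/-- A continuous function is bounded on the square by its bound on the grid points. -/
lemma le_of_grid_le {f : EuclideanSpace ℝ (Fin 2) → ℝ} (hf : Continuous f) {a b L C : ℝ}
    (hL : 0 < L) (h : ∀ n i j, i < 2 ^ n → j < 2 ^ n → f (grid a b L n i j) ≤ C)
    {x : EuclideanSpace ℝ (Fin 2)} (hx : x ∈ sqIcc a b L) : f x ≤ C := by
  obtain ⟨i, hi, hit⟩ := exists_coord hL hx.1
  obtain ⟨j, hj, hjt⟩ := exists_coord hL hx.2
  have ht : Tendsto (fun n => grid a b L n (i n) (j n)) atTop (𝓝 x) := by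
    have e : x = WithLp.toLp 2 (fun k => x k) := rfl
    rw [e]
    refine ((PiLp.continuous_toLp 2 _).tendsto _).comp (tendsto_pi_nhds.2 fun k => ?_)
    fin_cases k
    · simpa using hit
    · simpa using hjt
  exact le_of_tendsto ((hf.tendsto x).comp ht) (Eventually.of_forall fun n => h n _ _ (hi n) (hj n))

/-- Deterministic chaining. The thresholds `(t / 8) (3 / 4)^n` sum to `t / 2`, and `0 < t` handles the
value `0` which the inner real-valued supremum takes at points `x ∉ sqIcc a b L`. -/
lemma sup_lt_of_chain {f : EuclideanSpace ℝ (Fin 2) → ℝ} (hf : Continuous f) {a b L t : ℝ}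
    (hL : 0 < L) (ht : 0 < t) (h0 : f (grid a b L 0 0 0) < t / 2)
    (hinc : ∀ n i j, i < 2 ^ (n + 1) → j < 2 ^ (n + 1) →
      f (grid a b L (n + 1) i j) - f (grid a b L n (i / 2) (j / 2)) < t / 8 * (3 / 4) ^ n) :
    ⨆ x ∈ sqIcc a b L, f x < t := by
  have hg : ∀ n i j, i < 2 ^ n → j < 2 ^ n →
      f (grid a b L n i j) ≤ f (grid a b L 0 0 0) + t / 2 * (1 - (3 / 4) ^ n) := by
    intro n
    induction n with
    | zero =>
      intro i j hi hj
      obtain rfl : i = 0 := by simpa using hi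
      obtain rfl : j = 0 := by simpa using hj
      simp
    | succ n ih =>
      intro i j hi hj
      have h1 := hinc n i j hi hj
      have h2 := ih (i / 2) (j / 2) (by rw [pow_succ] at hi; omega) (by rw [pow_succ] at hj; omega)
      rw [pow_succ]
      linarith
  have hb : ∀ x ∈ sqIcc a b L, f x ≤ f (grid a b L 0 0 0) + t / 2 := fun x hx =>
    le_of_grid_le hf hL (fun n i j hi hj => (hg n i j hi hj).trans (by
      have : (0:ℝ) < (3 / 4) ^ n := by positivity
      nlinarith)) hx
  refine lt_of_le_of_lt (b := max (f (grid a b L 0 0 0) + t / 2) 0) ?_ (max_lt (by linarith) ht)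
  exact Real.iSup_le (fun x => Real.iSup_le (fun hx => (hb x hx).trans (le_max_left _ _))
    (le_max_right _ _)) (le_max_right _ _)

/-- The union bound series: `4^(n+1)` links at level `n`, each of probability `exp (-q (9/8)^n)`. -/
lemma chain_sum_le {q : ℝ} (hq : 24 * Real.log 2 ≤ q) :
    ∑' n : ℕ, (4:ENNReal) ^ (n + 1) * ENNReal.ofReal (Real.exp (-(q * (9 / 8) ^ n)))
      ≤ ENNReal.ofReal (8 * Real.exp (-q)) := by
  have hq0 : 0 ≤ q := le_trans (by positivity) hq
  have h8 : Real.exp (-(q / 8)) ≤ 1 / 8 := by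
    have : Real.exp (-(3 * Real.log 2)) = 1 / 8 := by
      rw [Real.exp_neg, mul_comm, Real.exp_mul, Real.exp_log two_pos]; norm_num
    rw [← this]
    exact Real.exp_le_exp.2 (by linarith)
  have hterm : ∀ n : ℕ, (4:ENNReal) ^ (n + 1) * ENNReal.ofReal (Real.exp (-(q * (9 / 8) ^ n)))
      ≤ ENNReal.ofReal (4 * Real.exp (-q) * (1 / 2) ^ n) := by
    intro n
    have e4 : (4:ENNReal) ^ (n + 1) = ENNReal.ofReal (4 ^ (n + 1)) := by
      rw [ENNReal.ofReal_pow (by norm_num)]; norm_num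
    rw [e4, ← ENNReal.ofReal_mul (by positivity)]
    refine ENNReal.ofReal_le_ofReal ?_
    have hB : 1 + (n : ℝ) * (1 / 8) ≤ (9 / 8) ^ n := by
      have := one_add_mul_le_pow (a := (1 / 8 : ℝ)) (by norm_num) n
      norm_num at this ⊢
      linarith
    have hE : Real.exp (-(q * (9 / 8) ^ n)) ≤ Real.exp (-q) * (1 / 8) ^ n := by
      calc _ ≤ Real.exp (-q + n * -(q / 8)) := Real.exp_le_exp.2 (by nlinarith)
        _ = Real.exp (-q) * Real.exp (-(q / 8)) ^ n := by rw [Real.exp_add, Real.exp_nat_mul]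
        _ ≤ _ := by gcongr
    calc _ ≤ (4:ℝ) ^ (n + 1) * (Real.exp (-q) * (1 / 8) ^ n) := by gcongr
      _ = 4 * Real.exp (-q) * (4 * (1 / 8)) ^ n := by rw [mul_pow]; ring
      _ = _ := by norm_num
  refine (ENNReal.tsum_le_tsum hterm).trans_eq ?_
  rw [← ENNReal.ofReal_tsum_of_nonneg (fun n => by positivity)
    (summable_geometric_two.mul_left _), tsum_mul_left, tsum_geometric_two]
  congr 1
  ring

theorem stmt4 : ∃ k₀ : ℕ, 0 < k₀ ∧
    ∀ k : ℕ, k₀ ≤ k → ∀ δ : ℝ, δ ∈ Set.Ioo (0:ℝ) 1 →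
    ∃ r₀ : ℕ, ∀ r : ℕ, r₀ ≤ r →
    ∀ (Ω : Type) (mΩ : MeasurableSpace Ω) (P : Measure Ω),
      IsProbabilityMeasure P →
      ∀ φ : EuclideanSpace ℝ (Fin 2) → Ω → ℝ,
      (∀ᵐ ω ∂P, Continuous fun x => φ x ω) →
      (∀ (n : ℕ) (a : Fin n → ℝ) (z : Fin n → EuclideanSpace ℝ (Fin 2)),
        ∃ v : NNReal, Measure.map (fun ω => ∑ i, a i * φ (z i) ω) P = gaussianReal 0 v) →
      (∀ x y, (∫ ω, φ x ω * φ y ω ∂P) = covG1 k r x y) →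
      ∀ a b : ℝ,
        P {ω | δ * k * r * Real.log 2 ≤ ⨆ x ∈ sqIcc a b (5 * (2:ℝ) ^ (-(k * r : ℤ))), φ x ω}
          ≤ ENNReal.ofReal (2 * Real.exp (-(1/8) * δ^2 * k * r * Real.log 2)) := by
  refine ⟨1, one_pos, fun k hk δ hδ => ?_⟩
  have hδ0 : 0 < δ := hδ.1
  have hl2 : 0 < Real.log 2 := Real.log_pos one_lt_two
  have hk0 : (0:ℝ) < k := by exact_mod_cast hk
  -- `r ≥ 640` makes half of `q` dominate `δ² σ² / 8`; the other bound makes the rest at least `24`.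
  refine ⟨max 640 ⌈192 / (δ ^ 2 * k * Real.log 2)⌉₊, fun r hr Ω mΩ P hP φ hcont hgauss hcov a b => ?_⟩
  have hr1 : (640:ℝ) ≤ r := by exact_mod_cast (le_max_left _ _).trans hr
  have hr2 : 192 / (δ ^ 2 * k * Real.log 2) ≤ r := Nat.ceil_le.1 ((le_max_right _ _).trans hr)
  rw [div_le_iff₀ (by positivity)] at hr2
  have hr0 : (0:ℝ) < r := by linarith
  set L : ℝ := 5 * (2:ℝ) ^ (-(k * r : ℤ)) with hLdef
  have hL : 0 < L := by positivity
  have hLs : L * 2 ^ (k * r) = 5 := by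
    rw [hLdef, mul_assoc, zpow_neg]
    have : (2:ℝ) ^ ((k:ℤ) * r) = 2 ^ (k * r) := by norm_cast
    rw [this, inv_mul_cancel₀ (by positivity), mul_one]
  set t : ℝ := δ * k * r * Real.log 2 with htdef
  have ht : 0 < t := by positivity
  have hsingle : ∀ x, ∃ v : NNReal, P.map (φ x) = gaussianReal 0 v := by
    intro x
    simpa using hgauss 1 (fun _ => 1) (fun _ => x)
  have hLp : ∀ x, MemLp (φ x) 2 P := fun x => memLp_of_map_gaussian (hsingle x).choose_spec
  have hI : ∀ x y, Integrable (fun ω => φ x ω * φ y ω) P := fun x y => (hLp x).integrable_mul (hLp y)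
  have htail0 : P {ω | t / 2 ≤ φ (grid a b L 0 0 0) ω}
      ≤ ENNReal.ofReal (Real.exp (-(1/8) * δ^2 * k * r * Real.log 2)) := by
    obtain ⟨v, hv⟩ := hsingle (grid a b L 0 0 0)
    have hv2 : (v : ℝ) = k * r * Real.log 2 := by
      rw [← integral_sq_of_map_gaussian hv, ← covG1_self k r (grid a b L 0 0 0), ← hcov]
      simp only [sq]
    refine (tail_of_map_gaussian hv (V := k * r * Real.log 2) (by positivity) hv2.le
      (by positivity)).trans_eq ?_
    congr 2
    rw [htdef]
    field_simp
    ring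
  set q : ℝ := δ ^ 2 * k * r ^ 2 * Real.log 2 / 2560 with hqdef
  have htail : ∀ n i j, P {ω | t / 8 * (3 / 4) ^ n ≤
      φ (grid a b L (n + 1) i j) ω - φ (grid a b L n (i / 2) (j / 2)) ω}
      ≤ ENNReal.ofReal (Real.exp (-(q * (9 / 8) ^ n))) := by
    intro n i j
    set x := grid a b L (n + 1) i j
    set y := grid a b L n (i / 2) (j / 2)
    have hd : dist x y ≤ L / 2 ^ n := dist_grid_le a b hL.le n i j
    obtain ⟨v, hv⟩ : ∃ v : NNReal, P.map (fun ω => φ x ω - φ y ω) = gaussianReal 0 v := by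
      simpa [Fin.sum_univ_two, ← sub_eq_add_neg] using hgauss 2 ![1, -1] ![x, y]
    have hvV : (v : ℝ) ≤ 20 * (k * Real.log 2) / 2 ^ n := by
      rw [← integral_sq_of_map_gaussian hv]
      have e : ∫ ω, (φ x ω - φ y ω) ^ 2 ∂P
          = covG1 k r x x + covG1 k r y y - 2 * covG1 k r x y := by
        rw [← hcov, ← hcov, ← hcov, ← integral_const_mul, ← integral_add (hI x x) (hI y y),
          ← integral_sub (by exact (hI x x).add (hI y y)) ((hI x y).const_mul 2)]
        congr 1
        ext ω
        ring
      rw [e]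
      refine (incr_cov_le k r hk x y).trans ?_
      calc _ ≤ 4 * (k * Real.log 2) * (L / 2 ^ n) * 2 ^ (k * r) := by gcongr
        _ = 4 * (k * Real.log 2) * (L * 2 ^ (k * r)) / 2 ^ n := by ring
        _ = _ := by rw [hLs]; ring
    refine (tail_of_map_gaussian hv (V := 20 * (k * Real.log 2) / 2 ^ n) (by positivity) hvV
      (by positivity)).trans_eq ?_
    congr 3
    have e : ((9:ℝ) / 8) ^ n = ((3 / 4) ^ n) ^ 2 * 2 ^ n := by
      rw [← pow_mul, mul_comm n 2, pow_mul, ← mul_pow]; norm_num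
    rw [e, hqdef, htdef]
    field_simp
    ring
  have hsub : {ω | t ≤ ⨆ x ∈ sqIcc a b L, φ x ω} ⊆
      {ω | ¬ Continuous fun x => φ x ω} ∪ ({ω | t / 2 ≤ φ (grid a b L 0 0 0) ω} ∪
        ⋃ n : ℕ, ⋃ ij ∈ Finset.range (2 ^ (n + 1)) ×ˢ Finset.range (2 ^ (n + 1)),
          {ω | t / 8 * (3 / 4) ^ n ≤
            φ (grid a b L (n + 1) ij.1 ij.2) ω - φ (grid a b L n (ij.1 / 2) (ij.2 / 2)) ω}) := by
    intro ω hω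
    by_contra hcon
    simp only [Set.mem_union, Set.mem_iUnion, Set.mem_ofPred_eq, not_or, not_exists, not_not, not_le,
      Finset.mem_product, Finset.mem_range] at hcon
    obtain ⟨h1, h2, h3⟩ := hcon
    exact absurd hω (not_le.2 (sup_lt_of_chain h1 hL ht h2
      fun n i j hi hj => h3 n (i, j) ⟨hi, hj⟩))
  have hU : P (⋃ n : ℕ, ⋃ ij ∈ Finset.range (2 ^ (n + 1)) ×ˢ Finset.range (2 ^ (n + 1)),
          {ω | t / 8 * (3 / 4) ^ n ≤
            φ (grid a b L (n + 1) ij.1 ij.2) ω - φ (grid a b L n (ij.1 / 2) (ij.2 / 2)) ω})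
      ≤ ∑' n : ℕ, (4:ENNReal) ^ (n + 1) * ENNReal.ofReal (Real.exp (-(q * (9 / 8) ^ n))) := by
    refine (measure_iUnion_le _).trans (ENNReal.tsum_le_tsum fun n => ?_)
    refine (measure_biUnion_finset_le _ _).trans
      ((Finset.sum_le_sum fun ij _ => htail n ij.1 ij.2).trans_eq ?_)
    rw [Finset.sum_const, Finset.card_product, Finset.card_range, nsmul_eq_mul, ← mul_pow]
    norm_num
  have hqge : 24 + 1 / 8 * δ ^ 2 * k * r * Real.log 2 ≤ q := by
    have e : q - 1 / 8 * δ ^ 2 * k * r * Real.log 2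
        = (r * (δ ^ 2 * k * Real.log 2)) * (r / 2560 - 1 / 8) := by rw [hqdef]; ring
    nlinarith
  have hlog1 : Real.log 2 ≤ 1 := by linarith [Real.log_two_lt_d9]
  have hq24 : 24 * Real.log 2 ≤ q := by
    have : 0 ≤ 1 / 8 * δ ^ 2 * k * r * Real.log 2 := by positivity
    linarith
  have h8 : 8 * Real.exp (-q) ≤ Real.exp (-(1/8) * δ^2 * k * r * Real.log 2) := by
    have e8 : (8:ℝ) = Real.exp (3 * Real.log 2) := by
      rw [mul_comm, Real.exp_mul, Real.exp_log two_pos]; norm_num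
    calc 8 * Real.exp (-q) = Real.exp (3 * Real.log 2 + -q) := by rw [Real.exp_add, ← e8]
      _ ≤ _ := Real.exp_le_exp.2 (by linarith)
  have h0 : P {ω | ¬ Continuous fun x => φ x ω} = 0 := hcont
  calc _ ≤ _ := measure_mono hsub
    _ ≤ _ := measure_union_le _ _
    _ ≤ 0 + (ENNReal.ofReal (Real.exp (-(1/8) * δ^2 * k * r * Real.log 2)) +
          ENNReal.ofReal (Real.exp (-(1/8) * δ^2 * k * r * Real.log 2))) := by
        refine add_le_add h0.le ((measure_union_le _ _).trans (add_le_add htail0 ?_))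
        exact hU.trans ((chain_sum_le hq24).trans (ENNReal.ofReal_le_ofReal h8))
    _ = _ := by
        rw [zero_add, ← ENNReal.ofReal_add (by positivity) (by positivity), two_mul]
end

section
/- For all positive integers k and r, setting ε := 2^{−kr}, for all x, y ∈ ℝ² with 0 < |x−y| ≤ 2 one has G(ε·x, ε·y) ≤ G(x,y) + k·r·log 2 = G(x,y) + log(1/ε). -/
/-!
The covariance is exactly scale-covariant: scaling both points and the radius by the same factor
leaves the normalized overlap `ballA` unchanged (`ballA_smul`), so for `ε = 2 ^ (-kr)` the terms
`j ≥ r` of the series for `(ε x, ε y)` are exactly the terms of the series for `(x, y)`, shifted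
by `r`. The first `r` terms are each at most `1` (`ballA_le_one`) and thus contribute at most
`k r log 2`. Splitting the series is legitimate because for distinct points the balls of small
radius are disjoint, so only finitely many terms are nonzero (`summable_ballA`).
-/

open MeasureTheory

/-- `G(x,y) = k log 2 ∑_{j≥0} A(x,y;2^{-kj})`. -/
noncomputable def covG (k : ℕ) (x y : EuclideanSpace ℝ (Fin 2)) : ℝ :=
  (k : ℝ) * Real.log 2 * ∑' j : ℕ, ballA x y ((2:ℝ) ^ (-(k * j : ℤ)))

open scoped Pointwise

lemma ballA_le_one (x y : EuclideanSpace ℝ (Fin 2)) (R : ℝ) : ballA x y R ≤ 1 := by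
  unfold ballA
  apply div_le_one_of_le₀ _ ENNReal.toReal_nonneg
  exact ENNReal.toReal_mono measure_ball_lt_top.ne (measure_mono Set.inter_subset_left)

lemma ballA_smul (x y : EuclideanSpace ℝ (Fin 2)) {c : ℝ} (hc : 0 < c) (R : ℝ) :
    ballA (c • x) (c • y) (c * R) = ballA x y R := by
  have hball : ∀ z : EuclideanSpace ℝ (Fin 2),
      Metric.ball (c • z) (c * R) = c • Metric.ball z R := by
    intro z
    rw [smul_ball hc.ne', Real.norm_of_nonneg hc.le]
  unfold ballA
  rw [hball, hball, ← Set.smul_set_inter₀ hc.ne', Measure.addHaar_smul, Measure.addHaar_smul,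
    ENNReal.toReal_mul, ENNReal.toReal_mul]
  apply mul_div_mul_left
  rw [ENNReal.toReal_ofReal (abs_nonneg _)]
  positivity

lemma ballA_eq_zero (x y : EuclideanSpace ℝ (Fin 2)) {R : ℝ} (h : R + R ≤ dist x y) :
    ballA x y R = 0 := by
  unfold ballA
  rw [(Metric.ball_disjoint_ball h).inter_eq]
  simp

lemma summable_ballA {k : ℕ} (hk : 0 < k) {x y : EuclideanSpace ℝ (Fin 2)}
    (h : 0 < dist x y) :
    Summable fun j : ℕ => ballA x y ((2:ℝ) ^ (-(k * j : ℤ))) := by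
  obtain ⟨n, hn⟩ := exists_pow_lt_of_lt_one (half_pos h) (by norm_num : (1 / 2 : ℝ) < 1)
  apply summable_of_ne_finset_zero (s := Finset.range n)
  intro j hj
  rw [Finset.mem_range, not_lt] at hj
  apply ballA_eq_zero
  have hle : (2:ℝ) ^ (-(k * j : ℤ)) ≤ (1 / 2) ^ n := by
    rw [one_div, inv_pow, ← zpow_natCast, ← zpow_neg]
    apply zpow_le_zpow_right₀ (by norm_num)
    have : n ≤ k * j := hj.trans (Nat.le_mul_of_pos_left j hk)
    have : (n : ℤ) ≤ k * j := by exact_mod_cast this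
    linarith
  linarith

theorem stmt16 (k r : ℕ) (hk : 0 < k) (hr : 0 < r)
    (x y : EuclideanSpace ℝ (Fin 2)) (h1 : 0 < dist x y) (h2 : dist x y ≤ 2) :
    covG k ((2:ℝ) ^ (-(k * r : ℤ)) • x) ((2:ℝ) ^ (-(k * r : ℤ)) • y)
        ≤ covG k x y + (k : ℝ) * r * Real.log 2 ∧
    (k : ℝ) * r * Real.log 2 = Real.log (1 / (2:ℝ) ^ (-(k * r : ℤ))) := by
  constructor
  · have hc : (0:ℝ) < (2:ℝ) ^ (-(k * r : ℤ)) := by positivity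
    have hd : 0 < dist ((2:ℝ) ^ (-(k * r : ℤ)) • x) ((2:ℝ) ^ (-(k * r : ℤ)) • y) := by
      rw [dist_smul₀]
      exact mul_pos (norm_pos_iff.2 hc.ne') h1
    have hshift : ∀ j : ℕ,
        ballA ((2:ℝ) ^ (-(k * r : ℤ)) • x) ((2:ℝ) ^ (-(k * r : ℤ)) • y)
          ((2:ℝ) ^ (-(k * (j + r : ℕ) : ℤ))) = ballA x y ((2:ℝ) ^ (-(k * j : ℤ))) := by
      intro j
      rw [← ballA_smul x y hc, ← zpow_add₀ two_ne_zero]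
      congr 2
      push_cast
      ring
    have hhead : ∑ j ∈ Finset.range r,
        ballA ((2:ℝ) ^ (-(k * r : ℤ)) • x) ((2:ℝ) ^ (-(k * r : ℤ)) • y)
          ((2:ℝ) ^ (-(k * j : ℤ))) ≤ r := by
      simpa using Finset.sum_le_card_nsmul (Finset.range r) _ 1
        fun j _ => ballA_le_one ((2:ℝ) ^ (-(k * r : ℤ)) • x) ((2:ℝ) ^ (-(k * r : ℤ)) • y)
          ((2:ℝ) ^ (-(k * j : ℤ)))
    have hlog : 0 ≤ (k : ℝ) * Real.log 2 :=
      mul_nonneg k.cast_nonneg (Real.log_nonneg one_le_two)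
    unfold covG
    rw [← (summable_ballA hk hd).sum_add_tsum_nat_add r, tsum_congr hshift]
    linarith [mul_le_mul_of_nonneg_left hhead hlog]
  · rw [one_div, Real.log_inv, Real.log_zpow]
    push_cast
    ring
end
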